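/- arXiv:2102.02453 — 3 statements merged into one kernel-verified Lean document; each statement's English description precedes it below -/
import Mathlib

section
/- Let k be a field of characteristic p > 0, let V be a k-vector space, and let α, β, γ be pairwise commuting k-linear endomorphisms of V such that α^p = 0, β^p = 0, and γ^{p^r} = 0 for some r ≥ 1. Then V, regarded as a k[u]/(u^p)-module with u acting as α, is projective if and only if V, regarded as a k[v]/(v^p)-module with v acting as α + β∘γ, is projective. -/
open Polynomial TensorProduct

/-- The truncated polynomial algebra `k[t]/(t^p)`. -/
abbrev TruncPoly (k : Type*) [Field k] (p : ℕ) :=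
  Polynomial k ⧸ Ideal.span {(Polynomial.X : Polynomial k) ^ p}

/-- The unique `k`-algebra homomorphism `k[t]/(t^p) → C` sending `t` to a given
element `c` with `c ^ p = 0`. -/
noncomputable def truncHom {k : Type*} [Field k] {p : ℕ} {C : Type*} [Ring C] [Algebra k C]
    (c : C) (hc : c ^ p = 0) : TruncPoly k p →ₐ[k] C :=
  Ideal.Quotient.liftₐ _ (Polynomial.aeval c) (by
    intro a ha
    rw [Ideal.mem_span_singleton] at ha
    obtain ⟨b, rfl⟩ := ha
    simp [map_mul, map_pow, hc])

/-- `V` regarded as a module over `k[t]/(t^p)` with `t` acting as the `p`-nilpotent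
`k`-linear endomorphism `θ`. -/
noncomputable def truncModEnd {k : Type*} [Field k] {p : ℕ} {V : Type*} [AddCommGroup V]
    [Module k V] (θ : Module.End k V) (hθ : θ ^ p = 0) : Module (TruncPoly k p) V :=
  Module.compHom V (truncHom θ hθ).toRingHom

/-- In an algebra over a field of prime characteristic `p`, the sum of two commuting
`p`-nilpotent elements is again `p`-nilpotent. -/
lemma add_pow_eq_zero_of_commute {k : Type*} [Field k] {p : ℕ} [Fact p.Prime] [CharP k p]
    {R : Type*} [Ring R] [Algebra k R] {x y : R} (h : Commute x y)
    (hx : x ^ p = 0) (hy : y ^ p = 0) : (x + y) ^ p = 0 := by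
  have hpR : (p : R) = 0 := by
    rw [← map_natCast (algebraMap k R), CharP.cast_eq_zero, map_zero]
  rw [h.add_pow]
  refine Finset.sum_eq_zero ?_
  intro i hi
  rw [Finset.mem_range, Nat.lt_succ_iff] at hi
  rcases Nat.lt_or_ge i p with hlt | hge
  · rcases Nat.eq_zero_or_pos i with rfl | hpos
    · simp [hy]
    · obtain ⟨m, hm⟩ := (Fact.out : p.Prime).dvd_choose_self hpos.ne' hlt
      rw [hm]
      push_cast
      rw [hpR, zero_mul, mul_zero]
  · have : i = p := le_antisymm hi hge
    subst this
    simp [hx]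

/-!
For `θ ^ p = 0`, projectivity over `k[t]/(t^p)` amounts to `ker θ = im θ ^ (p - 1)`: this holds for
`k[t]/(t^p)` itself and passes to flat modules, and conversely it makes `V` free on a `k`-linear
complement of `ker θ ^ (p - 1)`.

To compare `α` with `α + β γ`, replace `γ` by an operator that commutes with all coefficients. On
`V[Y]` let `X` lower degrees, `v Y ^ (n + 1) ↦ v Y ^ n`, and put `u = α + β X`. Since `X` lowers
degrees, `u` acts as `α` on leading coefficients, so `u` inherits exactness from `α`. Local
nilpotence of `γ` makes `X - γ` surjective on `V[Y]`, with kernel `{∑ γ ^ n v Y ^ n} ≅ V`, on which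
`u` acts as `α + β γ`. Hence `0 → V → V[Y] → V[Y] → 0` carries exactness back to `α + β γ`. The
converse is the same statement for `α + β γ`, `β` and `-γ`.
-/

section EndomorphismExactness

variable {R V : Type*} [Ring R] [AddCommGroup V] [Module R V]

lemma pow_succ_eq_zero_of_exact {u : Module.End R V} {m : ℕ} (h : Function.Exact ⇑(u ^ m) ⇑u) :
    u ^ (m + 1) = 0 := by
  rw [pow_succ']
  exact LinearMap.ext h.apply_apply_eq_zero

lemma exact_pow_pow_of_exact {u : Module.End R V} {m : ℕ}
    (h : Function.Exact ⇑(u ^ m) ⇑u) {i j : ℕ} (hij : i + j = m + 1) :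
    Function.Exact ⇑(u ^ i) ⇑(u ^ j) := by
  refine LinearMap.exact_iff.2 (le_antisymm ?_ ?_)
  · induction j generalizing i with
    | zero => simp [Module.End.one_eq_id]
    | succ j ih =>
      intro v hv
      obtain rfl : m = j + i := by omega
      rw [LinearMap.mem_ker, pow_succ', Module.End.mul_apply] at hv
      obtain ⟨w, hw⟩ := (h _).1 hv
      have hsub : v - (u ^ i) w ∈ LinearMap.ker (u ^ j) := by
        rw [LinearMap.mem_ker, map_sub, ← hw, pow_add, Module.End.mul_apply, sub_self]
      obtain ⟨x, hx⟩ := ih (i := i + 1) (by omega) hsub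
      refine ⟨w + u x, ?_⟩
      rw [map_add, ← Module.End.mul_apply, ← pow_succ, hx, add_sub_cancel]
  · rw [LinearMap.range_le_ker_iff, ← Module.End.mul_eq_comp, ← pow_add, add_comm, hij,
      pow_succ_eq_zero_of_exact h]

lemma exists_mem_ker_pow_apply_eq {u T : Module.End R V} {m : ℕ}
    (h : Function.Exact ⇑(u ^ m) ⇑u) (huT : Commute u T) (hT : Function.Surjective T)
    {v : V} (hTv : T v = 0) (huv : u v = 0) : ∃ w, T w = 0 ∧ (u ^ m) w = v := by
  obtain ⟨d, rfl⟩ := (h v).1 huv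
  have hTd : (u ^ m) (T d) = 0 := by
    rw [← Module.End.mul_apply, (huT.pow_left m).eq, Module.End.mul_apply, hTv]
  have h' : Function.Exact ⇑u ⇑(u ^ m) := by
    simpa only [pow_one] using exact_pow_pow_of_exact h (add_comm 1 m)
  obtain ⟨e', he'⟩ := (h' _).1 hTd
  obtain ⟨e, rfl⟩ := hT e'
  refine ⟨d - u e, ?_, ?_⟩
  · rw [map_sub, ← he', ← Module.End.mul_apply T, ← huT.eq, Module.End.mul_apply, sub_self]
  · rw [map_sub, h'.apply_apply_eq_zero, sub_zero]

end EndomorphismExactness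

section RingElementAction

variable {A N M : Type*} [CommRing A] [AddCommGroup N] [Module A N] [AddCommGroup M] [Module A M]

lemma exact_smul_of_flat [Module.Flat A M] {a b : A}
    (h : Function.Exact (a * ·) (b * ·)) : Function.Exact (a • · : M → M) (b • · : M → M) := by
  have hA : Function.Exact (LinearMap.lsmul A A a) (LinearMap.lsmul A A b) := h
  have hM : Function.Exact (LinearMap.lsmul A M a) (LinearMap.lsmul A M b) := by
    refine (Module.Flat.lTensor_exact M hA).of_ladder_linearEquiv_of_exact
      (e₁ := TensorProduct.rid A M) (e₂ := TensorProduct.rid A M) (e₃ := TensorProduct.rid A M)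
      ?_ ?_
    all_goals ext; simp
  exact hM

lemma exact_smul_pow_of_exact {a : A} {m : ℕ}
    (h : Function.Exact (a ^ m • · : M → M) (a • · : M → M)) :
    Function.Exact (a • · : M → M) (a ^ m • · : M → M) := by
  have coe_pow (j : ℕ) : ⇑(algebraMap A (Module.End A M) a ^ j) = (a ^ j • ·) := by
    ext v
    rw [← map_pow, Module.algebraMap_end_apply]
  have hEnd : Function.Exact ⇑(algebraMap A (Module.End A M) a ^ m)
      ⇑(algebraMap A (Module.End A M) a) := by
    rw [coe_pow]
    exact h
  have hpow := exact_pow_pow_of_exact hEnd (add_comm 1 m)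
  rwa [coe_pow, coe_pow, pow_one] at hpow

lemma injective_of_isNilpotent_smul {a : A} (ha : IsNilpotent a) (f : N →ₗ[A] M)
    (hf : ∀ n, a • n = 0 → f n = 0 → n = 0) : Function.Injective f := by
  obtain ⟨j, hj⟩ := ha
  have eq_zero_of_pow_smul : ∀ i n, a ^ i • n = 0 → f n = 0 → n = 0 := by
    intro i
    induction i with
    | zero => intro n hn _; simpa using hn
    | succ i ih =>
      intro n hn hfn
      refine hf n (ih _ ?_ ?_) hfn
      · rw [smul_smul, ← pow_succ, hn]
      · rw [map_smul, hfn, smul_zero]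
  refine (injective_iff_map_eq_zero f).2 fun n hn => eq_zero_of_pow_smul j n ?_ hn
  rw [hj, zero_smul]

lemma surjective_of_isNilpotent_smul {a : A} (ha : IsNilpotent a) (f : N →ₗ[A] M)
    (hf : ∀ v, ∃ n v', f n + a • v' = v) : Function.Surjective f := by
  obtain ⟨j, hj⟩ := ha
  have eq_add_pow_smul : ∀ i v, ∃ n v', f n + a ^ i • v' = v := by
    intro i
    induction i with
    | zero => exact fun v => ⟨0, v, by simp⟩
    | succ i ih =>
      intro v
      obtain ⟨n, v', rfl⟩ := ih v
      obtain ⟨n', v'', rfl⟩ := hf v'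
      refine ⟨n + a ^ i • n', v'', ?_⟩
      rw [map_add, map_smul, smul_add, smul_smul, pow_succ, add_assoc]
  intro v
  obtain ⟨n, v', hv⟩ := eq_add_pow_smul j v
  exact ⟨n, by simpa [hj] using hv⟩

end RingElementAction

namespace TruncPoly

/-- The class of the variable `t` in `k[t]/(t^n)`. -/
noncomputable def gen (k : Type*) [Field k] (n : ℕ) : TruncPoly k n :=
  Ideal.Quotient.mk _ X

variable {k : Type*} [Field k] {n m : ℕ}

lemma gen_pow_self : gen k n ^ n = 0 := by
  rw [gen, ← map_pow, Ideal.Quotient.eq_zero_iff_mem]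
  exact Ideal.mem_span_singleton_self _

lemma isNilpotent_gen : IsNilpotent (gen k n) :=
  ⟨n, gen_pow_self⟩

lemma exists_algebraMap_add_gen_mul (a : TruncPoly k n) :
    ∃ c b, algebraMap k (TruncPoly k n) c + gen k n * b = a := by
  obtain ⟨f, rfl⟩ := Ideal.Quotient.mk_surjective a
  refine ⟨f.coeff 0, Ideal.Quotient.mk _ f.divX, ?_⟩
  conv_rhs => rw [← f.divX_mul_X_add, map_add, map_mul, mul_comm, add_comm]
  rfl

lemma exact_gen_pow_mul :
    Function.Exact (gen k (m + 1) ^ m * ·) (gen k (m + 1) * ·) := by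
  refine fun a => ⟨fun ha => ?_, ?_⟩
  · change gen k (m + 1) * a = 0 at ha
    obtain ⟨f, rfl⟩ := Ideal.Quotient.mk_surjective a
    rw [gen, ← map_mul, Ideal.Quotient.eq_zero_iff_mem, Ideal.mem_span_singleton, pow_succ'] at ha
    obtain ⟨g, rfl⟩ := (mul_dvd_mul_iff_left X_ne_zero).1 ha
    exact ⟨Ideal.Quotient.mk _ g, by simp only [gen, map_mul, map_pow]⟩
  · rintro ⟨b, rfl⟩
    change gen k (m + 1) * (gen k (m + 1) ^ m * b) = 0
    rw [← mul_assoc, ← pow_succ', gen_pow_self, zero_mul]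

lemma truncHom_gen {C : Type*} [Ring C] [Algebra k C] {c : C} (hc : c ^ n = 0) :
    truncHom c hc (gen k n) = c :=
  aeval_X c

lemma exists_one_tmul_add_gen_smul {W : Type*} [AddCommGroup W] [Module k W]
    (x : TruncPoly k n ⊗[k] W) : ∃ w y, 1 ⊗ₜ w + gen k n • y = x := by
  induction x using TensorProduct.induction_on with
  | zero => exact ⟨0, 0, by simp⟩
  | tmul a w =>
    obtain ⟨c, b, rfl⟩ := exists_algebraMap_add_gen_mul a
    refine ⟨c • w, b ⊗ₜ w, ?_⟩
    rw [add_tmul, smul_tmul', smul_eq_mul, tmul_smul, smul_tmul', Algebra.algebraMap_eq_smul_one]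
  | add x x' hx hx' =>
    obtain ⟨w, y, rfl⟩ := hx
    obtain ⟨w', y', rfl⟩ := hx'
    exact ⟨w + w', y + y', by rw [tmul_add, smul_add]; abel⟩

variable {V : Type*} [AddCommGroup V] [Module (TruncPoly k (m + 1)) V]

lemma free_of_exact_gen_pow_smul [Module k V] [IsScalarTower k (TruncPoly k (m + 1)) V]
    (h : Function.Exact (gen k (m + 1) ^ m • · : V → V) (gen k (m + 1) • · : V → V)) :
    Module.Free (TruncPoly k (m + 1)) V := by
  obtain ⟨W, hW⟩ :=
    ((LinearMap.ker (LinearMap.lsmul _ V (gen k (m + 1) ^ m))).restrictScalars k).exists_isCompl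
  let F : TruncPoly k (m + 1) ⊗[k] W →ₗ[TruncPoly k (m + 1)] V :=
    W.subtype.liftBaseChange (TruncPoly k (m + 1))
  have F_one_tmul (w : W) : F (1 ⊗ₜ w) = w := LinearMap.liftBaseChange_one_tmul ..
  have hAW := exact_smul_of_flat (M := TruncPoly k (m + 1) ⊗[k] W)
    (exact_gen_pow_mul (k := k) (m := m))
  have F_injective : Function.Injective F := by
    refine injective_of_isNilpotent_smul isNilpotent_gen F fun x hx hFx => ?_
    obtain ⟨y, hy⟩ : ∃ y, gen k (m + 1) ^ m • y = x := (hAW x).1 hx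
    obtain ⟨w, z, rfl⟩ := exists_one_tmul_add_gen_smul y
    have hz : gen k (m + 1) ^ m • gen k (m + 1) • z = 0 :=
      (exact_smul_pow_of_exact hAW).apply_apply_eq_zero z
    rw [smul_add, hz, add_zero] at hy
    rw [← hy, map_smul, F_one_tmul] at hFx
    have hw : w = 0 := Subtype.ext (Submodule.disjoint_def.1 hW.disjoint w hFx w.2)
    rw [← hy, hw, tmul_zero, smul_zero]
  have F_surjective : Function.Surjective F := by
    refine surjective_of_isNilpotent_smul isNilpotent_gen F fun v => ?_
    obtain ⟨u, hu, w, hw, rfl⟩ := Submodule.mem_sup.1 (hW.sup_eq_top ▸ Submodule.mem_top (x := v))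
    obtain ⟨v', rfl⟩ := (exact_smul_pow_of_exact h u).1 hu
    exact ⟨1 ⊗ₜ ⟨w, hw⟩, v', by rw [F_one_tmul, add_comm]⟩
  exact Module.Free.of_equiv (LinearEquiv.ofBijective F ⟨F_injective, F_surjective⟩)

lemma projective_iff_exact_gen_pow_smul [Module k V] [IsScalarTower k (TruncPoly k (m + 1)) V] :
    Module.Projective (TruncPoly k (m + 1)) V ↔
      Function.Exact (gen k (m + 1) ^ m • · : V → V) (gen k (m + 1) • · : V → V) := by
  refine ⟨fun _ => exact_smul_of_flat exact_gen_pow_mul, fun h => ?_⟩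
  have := free_of_exact_gen_pow_smul h
  infer_instance

end TruncPoly

lemma projective_truncModEnd_iff_exact {k V : Type*} [Field k] [AddCommGroup V] [Module k V]
    {m : ℕ} {θ : Module.End k V} (hθ : θ ^ (m + 1) = 0) :
    (letI := truncModEnd θ hθ
     Module.Projective (TruncPoly k (m + 1)) V) ↔ Function.Exact ⇑(θ ^ m) ⇑θ := by
  let := truncModEnd θ hθ
  have smul_def (a : TruncPoly k (m + 1)) (v : V) : a • v = truncHom θ hθ a v := rfl
  have : IsScalarTower k (TruncPoly k (m + 1)) V :=
    ⟨fun c a v => by rw [smul_def, smul_def, map_smul, LinearMap.smul_apply]⟩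
  rw [TruncPoly.projective_iff_exact_gen_pow_smul]
  have coe_smul (j : ℕ) : (TruncPoly.gen k (m + 1) ^ j • · : V → V) = ⇑(θ ^ j) := by
    ext v
    rw [smul_def, map_pow, TruncPoly.truncHom_gen]
  have coe_smul_one : (TruncPoly.gen k (m + 1) • · : V → V) = ⇑θ := by
    simpa only [pow_one] using coe_smul 1
  rw [coe_smul, coe_smul_one]

section Pencil

variable {R V : Type*} [Ring R] [AddCommGroup V] [Module R V]

/-- The endomorphism of `V[Y]` acting as `φ` on coefficients. Polynomials with coefficients in `V`
are encoded as finitely supported sequences `ℕ →₀ V`, with `f n` the coefficient of `Y ^ n`. -/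
noncomputable def coeffMap : Module.End R V →+* Module.End R (ℕ →₀ V) where
  toFun φ := Finsupp.mapRange.linearMap φ
  map_one' := Finsupp.mapRange.linearMap_id
  map_mul' _ _ := Finsupp.mapRange.linearMap_comp _ _
  map_zero' := by ext; simp
  map_add' _ _ := by ext; simp

@[simp]
lemma coeffMap_apply (φ : Module.End R V) (f : ℕ →₀ V) (n : ℕ) : coeffMap φ f n = φ (f n) :=
  rfl

variable (R V) in
/-- The lowering operator `X` on `V[Y]`, sending `v Y ^ (n + 1)` to `v Y ^ n` and constants
to `0`. -/
noncomputable def lowering : Module.End R (ℕ →₀ V) :=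
  Finsupp.lcomapDomain Nat.succ Nat.succ_injective

@[simp]
lemma lowering_apply (f : ℕ →₀ V) (n : ℕ) : lowering R V f n = f (n + 1) :=
  rfl

lemma commute_coeffMap_lowering (φ : Module.End R V) : Commute (coeffMap φ) (lowering R V) :=
  LinearMap.ext fun _ => Finsupp.ext fun _ => rfl

/-- The endomorphism `α + β X` of `V[Y]`, with `X` the lowering operator: a deformation of `α` that
specializes to `α + β * γ` on the kernel of `X - γ`. -/
noncomputable def pencil (α β : Module.End R V) : Module.End R (ℕ →₀ V) :=
  coeffMap α + coeffMap β * lowering R V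

lemma pencil_apply (α β : Module.End R V) (f : ℕ →₀ V) (n : ℕ) :
    pencil α β f n = α (f n) + β (f (n + 1)) :=
  rfl

lemma pencil_eq_add_mul_sub (α β γ : Module.End R V) :
    pencil α β = coeffMap (α + β * γ) + coeffMap β * (lowering R V - coeffMap γ) := by
  rw [pencil, map_add, map_mul, mul_sub]
  abel

lemma commute_pencil {α β γ : Module.End R V} (hαγ : Commute α γ)
    (hβγ : Commute β γ) : Commute (pencil α β) (lowering R V - coeffMap γ) := by
  have hX := commute_coeffMap_lowering (R := R) (V := V)
  exact .add_left ((hX α).sub_right (hαγ.map coeffMap))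
    (.mul_left ((hX β).sub_right (hβγ.map coeffMap))
      ((Commute.refl _).sub_right (hX γ).symm))

lemma pencil_pow_apply_of_apply_eq_zero {α β γ : Module.End R V} (hαγ : Commute α γ)
    (hβγ : Commute β γ) {f : ℕ →₀ V} (hf : (lowering R V - coeffMap γ) f = 0) (j : ℕ) :
    (pencil α β ^ j) f = coeffMap ((α + β * γ) ^ j) f := by
  induction j with
  | zero => simp
  | succ j ih =>
    have hT : (lowering R V - coeffMap γ) ((pencil α β ^ j) f) = 0 := by
      rw [← Module.End.mul_apply, ← ((commute_pencil hαγ hβγ).pow_left j).eq,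
        Module.End.mul_apply, hf, map_zero]
    rw [pow_succ', Module.End.mul_apply, pencil_eq_add_mul_sub α β γ, LinearMap.add_apply,
      Module.End.mul_apply (coeffMap β), ← pencil_eq_add_mul_sub, hT, map_zero, add_zero, ih,
      ← Module.End.mul_apply, ← map_mul, ← pow_succ']

lemma surjective_lowering_sub_coeffMap {γ : Module.End R V} (hγ : ∀ v, ∃ n, (γ ^ n) v = 0) :
    Function.Surjective (lowering R V - coeffMap γ) := by
  have single_mem (j : ℕ) : ∀ v n, (γ ^ j) v = 0 →
      Finsupp.single n v ∈ LinearMap.range (lowering R V - coeffMap γ) := by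
    induction j with
    | zero =>
      intro v n hv
      obtain rfl : v = 0 := by simpa using hv
      rw [Finsupp.single_zero]
      exact zero_mem _
    | succ j ih =>
      intro v n hv
      have hsum : Finsupp.single n v = (lowering R V - coeffMap γ) (Finsupp.single (n + 1) v) +
          Finsupp.single (n + 1) (γ v) := by
        ext i
        simp [Finsupp.single_apply, apply_ite γ]
      rw [hsum]
      exact add_mem (LinearMap.mem_range_self _ _) (ih _ _ hv)
  refine LinearMap.range_eq_top.1 (eq_top_iff.2 fun f _ => ?_)
  induction f using Finsupp.induction_linear with
  | zero => exact zero_mem _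
  | add f g hf hg => exact add_mem (hf trivial) (hg trivial)
  | single n v =>
    obtain ⟨j, hj⟩ := hγ v
    exact single_mem j v n hj

lemma exists_finsupp_pow_apply {γ : Module.End R V} {v : V} (hv : ∃ n, (γ ^ n) v = 0) :
    ∃ f : ℕ →₀ V, ∀ n, f n = (γ ^ n) v := by
  obtain ⟨j, hj⟩ := hv
  refine ⟨Finsupp.onFinset (Finset.range j) (fun n => (γ ^ n) v) fun n hn => ?_, fun _ => rfl⟩
  rw [Finset.mem_range]
  contrapose! hn
  exact Module.End.pow_map_zero_of_le hn hj

lemma pencil_pow_apply_of_top {α β : Module.End R V} {f : ℕ →₀ V} {n : ℕ}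
    (hf : ∀ i > n, f i = 0) (j : ℕ) :
    (∀ i > n, (pencil α β ^ j) f i = 0) ∧ (pencil α β ^ j) f n = (α ^ j) (f n) := by
  induction j with
  | zero => simpa using hf
  | succ j ih =>
    simp only [pow_succ', Module.End.mul_apply, pencil_apply]
    refine ⟨fun i hi => ?_, ?_⟩
    · rw [ih.1 i hi, ih.1 (i + 1) (by omega), map_zero, map_zero, add_zero]
    · rw [ih.2, ih.1 (n + 1) n.lt_succ_self, map_zero, add_zero]

lemma exact_pencil {α β : Module.End R V} {m : ℕ} (h : Function.Exact ⇑(α ^ m) ⇑α)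
    (hnil : pencil α β ^ (m + 1) = 0) :
    Function.Exact ⇑(pencil α β ^ m) ⇑(pencil α β) := by
  have apply_pow (g) : pencil α β ((pencil α β ^ m) g) = 0 := by
    rw [← Module.End.mul_apply, ← pow_succ', hnil, LinearMap.zero_apply]
  have mem_range_of_bound (n : ℕ) : ∀ f : ℕ →₀ V, (∀ i ≥ n, f i = 0) → pencil α β f = 0 →
      f ∈ Set.range (pencil α β ^ m) := by
    induction n with
    | zero =>
      intro f hf _
      exact ⟨0, by ext i; simp [hf i i.zero_le]⟩
    | succ n ih =>
      intro f hf huf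
      have hαf : α (f n) = 0 := by
        have hn := DFunLike.congr_fun huf n
        rwa [pencil_apply, hf (n + 1) le_rfl, map_zero, add_zero] at hn
      obtain ⟨w, hw⟩ := (h _).1 hαf
      obtain ⟨hgt, hn⟩ := pencil_pow_apply_of_top (α := α) (β := β) (f := Finsupp.single n w)
        (fun i hi => Finsupp.single_eq_of_ne hi.ne') m
      have hbound : ∀ i ≥ n, (f - (pencil α β ^ m) (Finsupp.single n w)) i = 0 := by
        intro i hi
        obtain rfl | hi := hi.eq_or_lt
        · simp [hn, hw]
        · simp [hgt i hi, hf i hi]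
      obtain ⟨g, hg⟩ := ih _ hbound (by rw [map_sub, huf, apply_pow, sub_zero])
      exact ⟨g + Finsupp.single n w, by rw [map_add, hg, sub_add_cancel]⟩
  refine fun f => ⟨fun hf => mem_range_of_bound (f.support.sup id + 1) f (fun i hi => ?_) hf, ?_⟩
  · by_contra hi'
    exact hi.not_gt (Nat.lt_succ_of_le (Finset.le_sup (f := id) (Finsupp.mem_support_iff.2 hi')))
  · rintro ⟨g, rfl⟩
    exact apply_pow g

end Pencil

section Transfer

variable {k V : Type*} [Field k] [AddCommGroup V] [Module k V] {α β γ : Module.End k V}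

lemma pencil_pow_eq_zero {p : ℕ} [Fact p.Prime] [CharP k p] (hαβ : Commute α β)
    (hα : α ^ p = 0) (hβ : β ^ p = 0) : pencil α β ^ p = 0 := by
  refine add_pow_eq_zero_of_commute (k := k)
    ((hαβ.map coeffMap).mul_right (commute_coeffMap_lowering α)) ?_ ?_
  · rw [← map_pow, hα, map_zero]
  · rw [(commute_coeffMap_lowering β).mul_pow, ← map_pow, hβ, map_zero, zero_mul]

variable {m : ℕ} [Fact (m + 1).Prime] [CharP k (m + 1)]

lemma exact_add_mul_of_exact (hαβ : Commute α β) (hαγ : Commute α γ) (hβγ : Commute β γ)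
    (hβ : β ^ (m + 1) = 0) (hγ : ∀ v, ∃ n, (γ ^ n) v = 0) (h : Function.Exact ⇑(α ^ m) ⇑α) :
    Function.Exact ⇑((α + β * γ) ^ m) ⇑(α + β * γ) := by
  have hα : α ^ (m + 1) = 0 := pow_succ_eq_zero_of_exact h
  have hθ : (α + β * γ) ^ (m + 1) = 0 :=
    add_pow_eq_zero_of_commute (k := k) (hαβ.mul_right hαγ) hα (by rw [hβγ.mul_pow, hβ, zero_mul])
  refine fun v => ⟨fun hv => ?_, ?_⟩
  · obtain ⟨f, hf⟩ := exists_finsupp_pow_apply (hγ v)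
    have hTf : (lowering k V - coeffMap γ) f = 0 := by
      ext n
      simp [hf, pow_succ']
    have huf : pencil α β f = 0 := by
      have hγθ (n : ℕ) : Commute (α + β * γ) (γ ^ n) :=
        (hαγ.add_left (hβγ.mul_left (Commute.refl γ))).pow_right n
      rw [← pow_one (pencil α β), pencil_pow_apply_of_apply_eq_zero hαγ hβγ hTf, pow_one]
      ext n
      rw [coeffMap_apply, hf, ← Module.End.mul_apply, (hγθ n).eq, Module.End.mul_apply, hv,
        map_zero, Finsupp.zero_apply]
    obtain ⟨d, hTd, hd⟩ := exists_mem_ker_pow_apply_eq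
      (exact_pencil h (pencil_pow_eq_zero hαβ hα hβ)) (commute_pencil hαγ hβγ)
      (surjective_lowering_sub_coeffMap hγ) hTf huf
    refine ⟨d 0, ?_⟩
    rw [pencil_pow_apply_of_apply_eq_zero hαγ hβγ hTd] at hd
    rw [← coeffMap_apply, hd, hf, pow_zero, Module.End.one_apply]
  · rintro ⟨w, rfl⟩
    rw [← Module.End.mul_apply, ← pow_succ', hθ, LinearMap.zero_apply]

lemma exact_add_mul_iff (hαβ : Commute α β) (hαγ : Commute α γ) (hβγ : Commute β γ)
    (hβ : β ^ (m + 1) = 0) (hγ : ∀ v, ∃ n, (γ ^ n) v = 0) :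
    Function.Exact ⇑(α ^ m) ⇑α ↔ Function.Exact ⇑((α + β * γ) ^ m) ⇑(α + β * γ) := by
  refine ⟨exact_add_mul_of_exact hαβ hαγ hβγ hβ hγ, fun h => ?_⟩
  have hθβ : Commute (α + β * γ) β := hαβ.add_left ((Commute.refl β).mul_left hβγ.symm)
  have hθγ : Commute (α + β * γ) (-γ) := (hαγ.add_left (hβγ.mul_left (Commute.refl γ))).neg_right
  have hγ' (v : V) : ∃ n, ((-γ) ^ n) v = 0 :=
    (hγ v).imp fun n hn => by rw [neg_pow, Module.End.mul_apply, hn, map_zero]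
  simpa using exact_add_mul_of_exact hθβ hθγ hβγ.neg_right hβ hγ' h

end Transfer

theorem statement0_general (k : Type*) [Field k] (p : ℕ) [Fact p.Prime] [CharP k p]
    (V : Type*) [AddCommGroup V] [Module k V]
    (α β γ : Module.End k V)
    (hαβ : Commute α β) (hαγ : Commute α γ) (hβγ : Commute β γ)
    (hα : α ^ p = 0) (hβ : β ^ p = 0) (hγ : ∀ v, ∃ n, (γ ^ n) v = 0) :
    (letI := truncModEnd α hα
     Module.Projective (TruncPoly k p) V) ↔
    (letI := truncModEnd (α + β * γ)
        (add_pow_eq_zero_of_commute (k := k) (hαβ.mul_right hαγ) hα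
          (by rw [hβγ.mul_pow, hβ, zero_mul]))
     Module.Projective (TruncPoly k p) V) := by
  obtain ⟨m, rfl⟩ := Nat.exists_eq_succ_of_ne_zero (Fact.out : p.Prime).ne_zero
  exact (projective_truncModEnd_iff_exact _).trans <|
    (exact_add_mul_iff hαβ hαγ hβγ hβ hγ).trans (projective_truncModEnd_iff_exact _).symm

theorem statement0 (k : Type*) [Field k] (p : ℕ) [Fact p.Prime] [CharP k p]
    (V : Type*) [AddCommGroup V] [Module k V]
    (α β γ : Module.End k V)
    (hαβ : Commute α β) (hαγ : Commute α γ) (hβγ : Commute β γ)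
    (hα : α ^ p = 0) (hβ : β ^ p = 0)
    (r : ℕ) (hr : 1 ≤ r) (hγ : γ ^ (p ^ r) = 0) :
    (letI := truncModEnd α hα
     Module.Projective (TruncPoly k p) V) ↔
    (letI := truncModEnd (α + β * γ)
        (add_pow_eq_zero_of_commute (k := k) (hαβ.mul_right hαγ) hα
          (by rw [hβγ.mul_pow, hβ, zero_mul]))
     Module.Projective (TruncPoly k p) V) := by
  exact statement0_general k p V α β γ hαβ hαγ hβγ hα hβ fun v =>
    ⟨p ^ r, by rw [hγ, LinearMap.zero_apply]⟩
end

section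
/- Let k be a field of characteristic p > 0, let A and B be associative unital k-algebras, and let a ∈ A, b ∈ B satisfy a^p = 0 and b^p = 0, so that (a⊗1 + 1⊗b)^p = 0 in A ⊗_k B. Assume that each of the following holds: (i) either A is free as a k[t]/(t^p)-module with t acting by left multiplication by a, or a = 0; (ii) either B is free as a k[t]/(t^p)-module with t acting by left multiplication by b, or b = 0; and (iii) at least one of A, B is free over k[t]/(t^p) in the sense of (i), (ii). Then A ⊗_k B is free as a k[t]/(t^p)-module with t acting by left multiplication by a⊗1 + 1⊗b. -/
open Polynomial TensorProduct

/-- `C` regarded as a module over `k[t]/(t^p)` with `t` acting by left multiplication by a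
`p`-nilpotent element `c`. -/
noncomputable def truncSMul {k : Type*} [Field k] {p : ℕ} {C : Type*} [Ring C] [Algebra k C]
    (c : C) (hc : c ^ p = 0) : Module (TruncPoly k p) C :=
  Module.compHom C (truncHom c hc).toRingHom

/-- If `a ∈ A` and `b ∈ B` are `p`-nilpotent, then `a ⊗ 1 + 1 ⊗ b` is `p`-nilpotent
in `A ⊗[k] B`. -/
lemma tmul_add_tmul_pow_eq_zero {k : Type*} [Field k] {p : ℕ} [Fact p.Prime] [CharP k p]
    {A B : Type*} [Ring A] [Ring B] [Algebra k A] [Algebra k B]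
    {a : A} {b : B} (ha : a ^ p = 0) (hb : b ^ p = 0) :
    (a ⊗ₜ[k] (1 : B) + (1 : A) ⊗ₜ[k] b) ^ p = 0 := by
  refine add_pow_eq_zero_of_commute (k := k) ?_ ?_ ?_
  · show _ * _ = _ * _
    rw [Algebra.TensorProduct.tmul_mul_tmul, Algebra.TensorProduct.tmul_mul_tmul,
      one_mul, mul_one, one_mul, mul_one]
  · rw [Algebra.TensorProduct.tmul_pow, ha, one_pow, TensorProduct.zero_tmul]
  · rw [Algebra.TensorProduct.tmul_pow, hb, one_pow, TensorProduct.tmul_zero]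

/-!
Freeness over `k[t]/(t^p)` is detected by a Weyl algebra relation: in characteristic `p`, a module
is free if and only if it carries a `k`-linear endomorphism `d` with `d t - t d = 1`. On a free
module, `d/dt` is such a `d`. Conversely, applying `d` to `t^(n+1) m = 0` gives
`t^n (t d m + (n + 1) m) = 0`, so by induction the kernel of `t^n` lies in the image of `t` for all
`n < p`, and any `k`-linear complement of the image of `t` then generates the module freely.
If `d` is such an endomorphism of `A`, then `d ⊗ 1` commutes with `1 ⊗ b`, and hence satisfies the
relation with `a ⊗ 1 + 1 ⊗ b`.
-/

section NilpotentSMul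

variable {R F M : Type*} [CommRing R] [AddCommGroup F] [Module R F] [AddCommGroup M] [Module R M]
  {t : R} {p : ℕ}

lemma injective_of_smul_preimage (φ : F →ₗ[R] M) (ht : t ^ p = 0)
    (hM : ∀ n < p, ∀ m : M, t ^ n • m = 0 → ∃ m', m = t • m')
    (hφ : ∀ y m, φ y = t • m → ∃ y', y = t • y') : Function.Injective φ := by
  refine (injective_iff_map_eq_zero φ).2 fun y hy => ?_
  have divisible : ∀ n ≤ p, ∃ y', y = t ^ n • y' := by
    intro n
    induction n with
    | zero => exact fun _ => ⟨y, by rw [pow_zero, one_smul]⟩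
    | succ n ih =>
      intro hn
      obtain ⟨y', rfl⟩ := ih (Nat.le_of_succ_le hn)
      obtain ⟨m, hm⟩ := hM n hn (φ y') (by rw [← map_smul, hy])
      obtain ⟨y'', rfl⟩ := hφ y' m hm
      exact ⟨y'', by rw [pow_succ, mul_smul]⟩
  obtain ⟨y', rfl⟩ := divisible p le_rfl
  rw [ht, zero_smul]

lemma surjective_of_exists_add_smul (φ : F →ₗ[R] M) (ht : t ^ p = 0)
    (hφ : ∀ m, ∃ y m', m = φ y + t • m') : Function.Surjective φ := by
  have approximation : ∀ n m, ∃ y m', m = φ y + t ^ n • m' := by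
    intro n
    induction n with
    | zero => exact fun m => ⟨0, m, by rw [map_zero, zero_add, pow_zero, one_smul]⟩
    | succ n ih =>
      intro m
      obtain ⟨y, m', rfl⟩ := ih m
      obtain ⟨z, m'', rfl⟩ := hφ m'
      exact ⟨y + t ^ n • z, m'', by
        rw [map_add, map_smul, smul_add, smul_smul, pow_succ, add_assoc]⟩
  intro m
  obtain ⟨y, m', rfl⟩ := approximation p m
  exact ⟨y, by rw [ht, zero_smul, add_zero]⟩

lemma exists_eq_one_tmul_add_smul {k V : Type*} [CommSemiring k] [Algebra k R] [AddCommMonoid V]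
    [Module k V] (hR : ∀ r : R, ∃ (x : k) (r' : R), r = algebraMap k R x + t * r')
    (y : R ⊗[k] V) : ∃ v z, y = 1 ⊗ₜ v + t • z := by
  induction y with
  | zero => exact ⟨0, 0, by rw [TensorProduct.tmul_zero, smul_zero, add_zero]⟩
  | tmul r v =>
    obtain ⟨x, r', rfl⟩ := hR r
    exact ⟨x • v, r' ⊗ₜ v, by
      rw [TensorProduct.add_tmul, Algebra.algebraMap_eq_smul_one, TensorProduct.smul_tmul,
        TensorProduct.smul_tmul', smul_eq_mul]⟩
  | add y₁ y₂ h₁ h₂ =>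
    obtain ⟨v₁, z₁, rfl⟩ := h₁
    obtain ⟨v₂, z₂, rfl⟩ := h₂
    exact ⟨v₁ + v₂, z₁ + z₂, by rw [TensorProduct.tmul_add, smul_add, add_add_add_comm]⟩

lemma free_of_pow_smul_eq_zero_imp {k : Type*} [Field k] [Algebra k R] [Module k M]
    [IsScalarTower k R M] (ht : t ^ p = 0)
    (hR : ∀ r : R, ∃ (x : k) (r' : R), r = algebraMap k R x + t * r')
    (hM : ∀ n < p, ∀ m : M, t ^ n • m = 0 → ∃ m', m = t • m') : Module.Free R M := by
  obtain ⟨V, hV⟩ := (LinearMap.range (Algebra.lsmul k k M t)).exists_isCompl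
  let φ : R ⊗[k] V →ₗ[R] M := V.subtype.liftBaseChange R
  have φ_one (v : V) : φ (1 ⊗ₜ v) = v := by simp [φ]
  have φ_injective : Function.Injective φ := by
    refine injective_of_smul_preimage φ ht hM fun y m hm => ?_
    obtain ⟨v, z, rfl⟩ := exists_eq_one_tmul_add_smul hR y
    have hv : (v : M) = t • (m - φ z) := by
      rw [smul_sub, ← hm, map_add, φ_one, map_smul, add_sub_cancel_right]
    have hv0 : (v : M) = 0 :=
      Submodule.disjoint_def.1 hV.disjoint v ⟨m - φ z, hv.symm⟩ v.2
    exact ⟨z, by rw [Submodule.coe_eq_zero.1 hv0, TensorProduct.tmul_zero, zero_add]⟩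
  have φ_surjective : Function.Surjective φ := by
    refine surjective_of_exists_add_smul φ ht fun m => ?_
    obtain ⟨_, v, ⟨m', rfl⟩, hv, rfl⟩ := Submodule.codisjoint_iff_exists_add_eq.1 hV.codisjoint m
    exact ⟨1 ⊗ₜ ⟨v, hv⟩, m', by rw [φ_one, add_comm]; rfl⟩
  exact Module.Free.of_equiv (LinearEquiv.ofBijective φ ⟨φ_injective, φ_surjective⟩)

end NilpotentSMul

section Commutator

variable {k R M : Type*} [CommRing R] [AddCommGroup M] [Module R M] {t : R}

lemma map_pow_succ_smul_of_commutator {d : M →+ M} (hd : ∀ m, d (t • m) = t • d m + m) (n : ℕ)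
    (m : M) : d (t ^ (n + 1) • m) = t ^ n • (t • d m + (n + 1) • m) := by
  induction n with
  | zero => simp [hd]
  | succ n ih =>
    rw [pow_succ', mul_smul, hd, ih]
    module

lemma exists_eq_smul_of_pow_smul_eq_zero [Field k] {p : ℕ} [CharP k p] [Module k M]
    [SMulCommClass R k M] {d : M →+ M} (hd : ∀ m, d (t • m) = t • d m + m) {n : ℕ} (hn : n < p)
    {m : M} (hm : t ^ n • m = 0) : ∃ m', m = t • m' := by
  induction n generalizing m with
  | zero => exact ⟨0, by rwa [smul_zero, ← one_smul R m, ← pow_zero t]⟩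
  | succ n ih =>
    have hcast : ((n + 1 : ℕ) : k) ≠ 0 := fun h =>
      Nat.not_dvd_of_pos_of_lt n.succ_pos hn ((CharP.cast_eq_zero_iff k p _).1 h)
    obtain ⟨m', hm'⟩ := ih (Nat.lt_of_succ_lt hn) (m := t • d m + (n + 1) • m) (by
      rw [← map_pow_succ_smul_of_commutator hd, hm, map_zero])
    refine ⟨((n + 1 : ℕ) : k)⁻¹ • (m' - d m), ?_⟩
    rw [smul_comm, smul_sub, ← hm', add_sub_cancel_left, ← Nat.cast_smul_eq_nsmul k,
      inv_smul_smul₀ hcast]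

lemma exists_commutator_of_free [CommSemiring k] [Algebra k R] [Module k M] [IsScalarTower k R M]
    [Module.Free R M] (δ : R →ₗ[k] R) (hδ : ∀ r, δ (t * r) = t * δ r + r) :
    ∃ d : M →ₗ[k] M, ∀ m, d (t • m) = t • d m + m := by
  let e := (Module.Free.chooseBasis R M).repr
  let e' := e.restrictScalars k
  refine ⟨e'.symm.conj (Finsupp.mapRange.linearMap δ), fun m => e.injective ?_⟩
  have e_conj (m : M) :
      e (e'.symm.conj (Finsupp.mapRange.linearMap δ) m) = Finsupp.mapRange.linearMap δ (e m) :=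
    e.apply_symm_apply _
  ext i
  simp only [e_conj, map_add, map_smul, Finsupp.mapRange.linearMap_apply,
    Finsupp.mapRange_apply, Finsupp.add_apply, Finsupp.smul_apply, smul_eq_mul, hδ]

end Commutator

namespace TruncPoly

variable (k : Type*) [Field k] (p : ℕ)

/-- The class of `t` in `k[t]/(t^p)`. -/
noncomputable def root : TruncPoly k p :=
  Ideal.Quotient.mk _ X

lemma root_pow : root k p ^ p = 0 :=
  Ideal.Quotient.eq_zero_iff_mem.2 (Ideal.mem_span_singleton_self _)

/-- The derivation `d/dt` of `k[t]/(t^p)`, as a `k`-linear map; it descends from `k[t]` because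
`(t^p)' = p t^(p-1)` vanishes in characteristic `p`. -/
noncomputable def derivative [CharP k p] : TruncPoly k p →ₗ[k] TruncPoly k p :=
  Submodule.mapQ ((Ideal.span {(X : k[X]) ^ p}).restrictScalars k)
    ((Ideal.span {(X : k[X]) ^ p}).restrictScalars k) Polynomial.derivative (by
      intro f hf
      obtain ⟨g, rfl⟩ := Ideal.mem_span_singleton.1 hf
      refine Ideal.mem_span_singleton.2 ?_
      simp [derivative_X_pow])

variable {k p}

lemma exists_eq_algebraMap_add_root_mul (r : TruncPoly k p) :
    ∃ (x : k) (r' : TruncPoly k p), r = algebraMap k _ x + root k p * r' := by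
  obtain ⟨f, rfl⟩ := Ideal.Quotient.mk_surjective r
  refine ⟨f.coeff 0, Ideal.Quotient.mk _ f.divX, ?_⟩
  nth_rw 1 [← f.X_mul_divX_add]
  rw [map_add, map_mul, add_comm]
  rfl

variable [CharP k p]

lemma derivative_mk (f : k[X]) :
    derivative k p (Ideal.Quotient.mk _ f) = Ideal.Quotient.mk _ (Polynomial.derivative f) :=
  rfl

lemma derivative_root_mul (r : TruncPoly k p) :
    derivative k p (root k p * r) = root k p * derivative k p r + r := by
  obtain ⟨f, rfl⟩ := Ideal.Quotient.mk_surjective r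
  rw [root, ← map_mul, derivative_mk, derivative_mk, ← map_mul, ← map_add, derivative_mul,
    derivative_X, one_mul, add_comm]

theorem free_iff_exists_commutator {M : Type*} [AddCommGroup M] [Module k M]
    [Module (TruncPoly k p) M] [IsScalarTower k (TruncPoly k p) M] :
    Module.Free (TruncPoly k p) M ↔
      ∃ d : M →ₗ[k] M, ∀ m, d (root k p • m) = root k p • d m + m := by
  refine ⟨fun _ => exists_commutator_of_free (derivative k p) derivative_root_mul, ?_⟩
  rintro ⟨d, hd⟩
  exact free_of_pow_smul_eq_zero_imp (root_pow k p) exists_eq_algebraMap_add_root_mul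
    fun n hn m => exists_eq_smul_of_pow_smul_eq_zero (k := k) (d := d.toAddMonoidHom) hd hn

end TruncPoly

lemma free_truncSMul_iff {k : Type*} [Field k] {p : ℕ} [CharP k p] {C : Type*} [Ring C]
    [Algebra k C] {c : C} (hc : c ^ p = 0) :
    (letI := truncSMul (k := k) c hc
     Module.Free (TruncPoly k p) C) ↔ ∃ d : C →ₗ[k] C, ∀ x, d (c * x) = c * d x + x := by
  let := truncSMul (k := k) c hc
  have root_smul (x : C) : TruncPoly.root k p • x = c * x :=
    congrArg (· * x) (aeval_X (R := k) c)
  have : IsScalarTower k (TruncPoly k p) C := ⟨fun x r y => by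
    change truncHom c hc (x • r) * y = x • (truncHom c hc r * y)
    rw [map_smul, smul_mul_assoc]⟩
  simpa only [root_smul] using TruncPoly.free_iff_exists_commutator (k := k) (p := p) (M := C)

section TensorProduct

variable {k A B : Type*} [CommSemiring k] [Semiring A] [Semiring B] [Algebra k A] [Algebra k B]

lemma rTensor_add_mul_of_commutator {a : A} {d : A →ₗ[k] A} (hd : ∀ x, d (a * x) = a * d x + x)
    (b : B) (z : A ⊗[k] B) :
    d.rTensor B ((a ⊗ₜ 1 + 1 ⊗ₜ b) * z) = (a ⊗ₜ 1 + 1 ⊗ₜ b) * d.rTensor B z + z := by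
  induction z with
  | zero => simp
  | tmul x y => simp [add_mul, hd, TensorProduct.add_tmul, add_right_comm]
  | add z w hz hw => simp only [mul_add, map_add, hz, hw, add_add_add_comm]

lemma lTensor_add_mul_of_commutator {b : B} {d : B →ₗ[k] B} (hd : ∀ y, d (b * y) = b * d y + y)
    (a : A) (z : A ⊗[k] B) :
    d.lTensor A ((a ⊗ₜ 1 + 1 ⊗ₜ b) * z) = (a ⊗ₜ 1 + 1 ⊗ₜ b) * d.lTensor A z + z := by
  induction z with
  | zero => simp
  | tmul x y => simp [add_mul, hd, TensorProduct.tmul_add, add_assoc]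
  | add z w hz hw => simp only [mul_add, map_add, hz, hw, add_add_add_comm]

end TensorProduct

theorem statement5_general (k : Type*) [Field k] (p : ℕ) [Fact p.Prime] [CharP k p]
    (A B : Type*) [Ring A] [Ring B] [Algebra k A] [Algebra k B]
    (a : A) (b : B) (ha : a ^ p = 0) (hb : b ^ p = 0)
    (hAB : (letI := truncSMul (k := k) (p := p) a ha
            Module.Free (TruncPoly k p) A) ∨
           (letI := truncSMul (k := k) (p := p) b hb
            Module.Free (TruncPoly k p) B)) :
    letI := truncSMul (k := k) (p := p) (a ⊗ₜ[k] (1 : B) + (1 : A) ⊗ₜ[k] b)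
      (tmul_add_tmul_pow_eq_zero (k := k) ha hb)
    Module.Free (TruncPoly k p) (A ⊗[k] B) := by
  refine (free_truncSMul_iff _).2 ?_
  rcases hAB with hA | hB
  · obtain ⟨d, hd⟩ := (free_truncSMul_iff ha).1 hA
    exact ⟨d.rTensor B, rTensor_add_mul_of_commutator hd b⟩
  · obtain ⟨d, hd⟩ := (free_truncSMul_iff hb).1 hB
    exact ⟨d.lTensor A, lTensor_add_mul_of_commutator hd a⟩

theorem statement5 (k : Type*) [Field k] (p : ℕ) [Fact p.Prime] [CharP k p]
    (A B : Type*) [Ring A] [Ring B] [Algebra k A] [Algebra k B]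
    (a : A) (b : B) (ha : a ^ p = 0) (hb : b ^ p = 0)
    (hA : (letI := truncSMul (k := k) (p := p) a ha
           Module.Free (TruncPoly k p) A) ∨ a = 0)
    (hB : (letI := truncSMul (k := k) (p := p) b hb
           Module.Free (TruncPoly k p) B) ∨ b = 0)
    (hAB : (letI := truncSMul (k := k) (p := p) a ha
            Module.Free (TruncPoly k p) A) ∨
           (letI := truncSMul (k := k) (p := p) b hb
            Module.Free (TruncPoly k p) B)) :
    letI := truncSMul (k := k) (p := p) (a ⊗ₜ[k] (1 : B) + (1 : A) ⊗ₜ[k] b)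
      (tmul_add_tmul_pow_eq_zero (k := k) ha hb)
    Module.Free (TruncPoly k p) (A ⊗[k] B) := by
  exact statement5_general k p A B a b ha hb hAB
end

section
/- Let k be a field of characteristic p > 0, let n ≥ 1, and let A = k[x_1, …, x_n]/(x_1^p, …, x_n^p). For any scalars λ_1, …, λ_n ∈ k, not all zero, the element a = λ_1 x_1 + ⋯ + λ_n x_n satisfies a^p = 0, and A is a free module of rank p^{n−1} over k[t]/(t^p) with t acting by multiplication by a. -/
open Polynomial TensorProduct

/-- The truncated polynomial algebra `k[x₁, …, xₙ]/(x₁^p, …, xₙ^p)`. -/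
abbrev TruncMvPoly (k : Type*) [Field k] (p n : ℕ) :=
  MvPolynomial (Fin n) k ⧸
    Ideal.span (Set.range fun i : Fin n => (MvPolynomial.X i : MvPolynomial (Fin n) k) ^ p)

/-- The image `xᵢ` of the variable `Xᵢ` in `k[x₁, …, xₙ]/(x₁^p, …, xₙ^p)`. -/
noncomputable def truncMvGen (k : Type*) [Field k] (p n : ℕ) (i : Fin n) : TruncMvPoly k p n :=
  Ideal.Quotient.mk _ (MvPolynomial.X i)

/-- In an algebra over a field of prime characteristic `p`, a finite sum of pairwise
commuting `p`-nilpotent elements is again `p`-nilpotent. -/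
lemma sum_pow_eq_zero_of_commute {k : Type*} [Field k] {p : ℕ} [Fact p.Prime] [CharP k p]
    {R : Type*} [Ring R] [Algebra k R] {ι : Type*} (s : Finset ι) (f : ι → R)
    (hcomm : ∀ i ∈ s, ∀ j ∈ s, Commute (f i) (f j))
    (hnil : ∀ i ∈ s, f i ^ p = 0) : (∑ i ∈ s, f i) ^ p = 0 := by
  induction s using Finset.cons_induction with
  | empty => simp [zero_pow (Fact.out : p.Prime).ne_zero]
  | cons a s ha ih =>
    rw [Finset.sum_cons]
    refine add_pow_eq_zero_of_commute (k := k)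
      (Commute.sum_right s f (f a) fun i hi =>
        hcomm a (Finset.mem_cons_self a s) i (Finset.mem_cons_of_mem hi))
      (hnil a (Finset.mem_cons_self a s))
      (ih (fun i hi j hj =>
          hcomm i (Finset.mem_cons_of_mem hi) j (Finset.mem_cons_of_mem hj))
        (fun i hi => hnil i (Finset.mem_cons_of_mem hi)))

/-- A `k`-linear combination of the generators of `k[x₁, …, xₙ]/(x₁^p, …, xₙ^p)` has
vanishing `p`-th power. -/
lemma truncMvGen_linear_pow_eq_zero (k : Type*) [Field k] (p : ℕ) [Fact p.Prime] [CharP k p]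
    (n : ℕ) (lam : Fin n → k) :
    (∑ i, lam i • truncMvGen k p n i) ^ p = 0 := by
  refine sum_pow_eq_zero_of_commute (k := k) Finset.univ _ ?_ ?_
  · intro i _ j _
    exact mul_comm _ _
  · intro i _
    have h : truncMvGen k p n i ^ p = 0 := by
      rw [truncMvGen, ← map_pow, Ideal.Quotient.eq_zero_iff_mem]
      exact Ideal.subset_span ⟨i, rfl⟩
    rw [_root_.smul_pow, h, smul_zero]

/-!
Suppose `λ i₀ ≠ 0`. Then `a` and the `x j` with `j ≠ i₀` generate the algebra `A`, so the
`q ^ (n - 1)` monomials in these `x j` with exponents below `q` span `A` over `k[t]/(t^q)`. The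
resulting surjection onto `A` from a free module of rank `q ^ (n - 1)` goes between `k`-vector
spaces of the same dimension `q ^ (n - 1) * q = q ^ n`, so it is an isomorphism.
-/

theorem span_range_prod_pow_eq_top_of_adjoin_eq_top {R A ι : Type*} [CommSemiring R]
    [CommSemiring A] [Algebra R A] [Fintype ι] {q : ℕ} {y : ι → A} (hy : ∀ i, y i ^ q = 0)
    (hgen : Algebra.adjoin R (Set.range y) = ⊤) :
    Submodule.span R (Set.range fun e : ι → Fin q => ∏ i, y i ^ (e i : ℕ)) = ⊤ := by
  set S := Submodule.span R (Set.range fun e : ι → Fin q => ∏ i, y i ^ (e i : ℕ))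
  have prod_pow_mem (e : ι → ℕ) : ∏ i, y i ^ e i ∈ S := by
    by_cases he : ∀ i, e i < q
    · exact Submodule.subset_span ⟨fun i => ⟨e i, he i⟩, rfl⟩
    · obtain ⟨i, hi⟩ := not_forall.1 he
      have hzero : y i ^ e i = 0 := pow_eq_zero_of_le (not_lt.1 hi) (hy i)
      rw [Finset.prod_eq_zero (Finset.mem_univ i) hzero]
      exact S.zero_mem
  have aeval_mem (f : MvPolynomial ι R) : MvPolynomial.aeval y f ∈ S := by
    induction f using MvPolynomial.induction_on' with
    | monomial e r =>
      rw [MvPolynomial.aeval_monomial, ← Algebra.smul_def,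
        Finsupp.prod_fintype _ _ fun i => pow_zero (y i)]
      exact S.smul_mem r (prod_pow_mem e)
    | add f g hf hg => exact map_add (MvPolynomial.aeval y) f g ▸ S.add_mem hf hg
  refine (Submodule.eq_top_iff').2 fun x => ?_
  rw [Algebra.adjoin_range_eq_range_aeval, AlgHom.range_eq_top] at hgen
  obtain ⟨f, rfl⟩ := hgen x
  exact aeval_mem f

theorem adjoin_insert_sum_smul_eq_top {R A ι : Type*} [CommRing R] [Ring A] [Algebra R A]
    [Fintype ι] {x : ι → A} (hgen : Algebra.adjoin R (Set.range x) = ⊤) {c : ι → R} {i₀ : ι}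
    (hc : IsUnit (c i₀)) :
    Algebra.adjoin R
      (insert (∑ i, c i • x i) (Set.range fun j : {j // j ≠ i₀} => x j)) = ⊤ := by
  classical
  set S := Algebra.adjoin R (insert (∑ i, c i • x i) (Set.range fun j : {j // j ≠ i₀} => x j))
  have mem_of_ne (j : ι) (hj : j ≠ i₀) : x j ∈ S :=
    Algebra.subset_adjoin (Set.mem_insert_of_mem _ ⟨⟨j, hj⟩, rfl⟩)
  have sum_mem : ∑ i, c i • x i ∈ S := Algebra.subset_adjoin (Set.mem_insert _ _)
  have sum_erase_mem : ∑ i ∈ Finset.univ.erase i₀, c i • x i ∈ S :=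
    S.sum_mem fun i hi => S.smul_mem (mem_of_ne i (Finset.ne_of_mem_erase hi)) (c i)
  have pivot_mem : x i₀ ∈ S := by
    have smul_mem : c i₀ • x i₀ ∈ S := by
      rw [← Finset.add_sum_erase _ _ (Finset.mem_univ i₀)] at sum_mem
      exact (add_mem_cancel_right sum_erase_mem).1 sum_mem
    exact (Submodule.smul_mem_iff_of_isUnit S.toSubmodule hc).1 smul_mem
  rw [eq_top_iff, ← hgen, Algebra.adjoin_le_iff]
  rintro _ ⟨i, rfl⟩
  by_cases hi : i = i₀
  · exact hi ▸ pivot_mem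
  · exact mem_of_ne i hi

theorem adjoin_eq_top_of_adjoin_insert_algebraMap {k R A : Type*} [CommSemiring k]
    [CommSemiring R] [Semiring A] [Algebra k R] [Algebra k A] [Algebra R A] [IsScalarTower k R A]
    {r : R} {s : Set A} (hgen : Algebra.adjoin k (insert (algebraMap R A r) s) = ⊤) :
    Algebra.adjoin R s = ⊤ := by
  have hle : Algebra.adjoin k (insert (algebraMap R A r) s) ≤
      (Algebra.adjoin R s).restrictScalars k :=
    Algebra.adjoin_le
      (Set.insert_subset ((Algebra.adjoin R s).algebraMap_mem r) Algebra.subset_adjoin)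
  exact Algebra.eq_top_iff.2 fun x => hle (hgen ▸ Algebra.mem_top)

theorem linearIndependent_of_span_eq_top_of_card_mul_finrank_le {k R M ι : Type*} [Semiring k]
    [OrzechProperty k] [Semiring R] [Module k R] [IsScalarTower k R R] [Module.Free k R]
    [Module.Finite k R] [AddCommMonoid M] [Module k M] [Module.Free k M] [Module R M]
    [IsScalarTower k R M] [Fintype ι] {v : ι → M}
    (hspan : Submodule.span R (Set.range v) = ⊤)
    (hcard : Fintype.card ι * Module.finrank k R ≤ Module.finrank k M) :
    LinearIndependent R v := by
  cases subsingleton_or_nontrivial k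
  · have := Module.subsingleton k R
    exact Function.injective_of_subsingleton _
  let φ := (Fintype.linearCombination R v).restrictScalars k
  have hφ : Function.Surjective φ := by
    rwa [LinearMap.coe_restrictScalars, ← LinearMap.range_eq_top,
      Fintype.range_linearCombination]
  have : Module.Finite k M := .of_surjective φ hφ
  have hrank : Module.finrank k (ι → R) ≤ Module.finrank k M := by
    simpa [Module.finrank_pi_fintype] using hcard
  have hbij := OrzechProperty.bijective_of_surjective_of_finrank_le φ hφ hrank
  exact linearIndependent_iff_injective_fintypeLinearCombination.2 hbij.injective

theorem free_finrank_of_adjoin_insert_algebraMap_eq_top {k R C κ : Type*} [CommRing k]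
    [CommRing R] [Nontrivial R] [CommRing C] [Algebra k R] [Algebra k C] [Algebra R C]
    [IsScalarTower k R C] [Module.Free k R] [Module.Finite k R] [Module.Free k C] [Fintype κ]
    {q : ℕ} {r : R} {y : κ → C} (hy : ∀ j, y j ^ q = 0)
    (hgen : Algebra.adjoin k (insert (algebraMap R C r) (Set.range y)) = ⊤)
    (hrank : q ^ Fintype.card κ * Module.finrank k R ≤ Module.finrank k C) :
    Module.Free R C ∧ Module.finrank R C = q ^ Fintype.card κ := by
  classical
  have hspan := span_range_prod_pow_eq_top_of_adjoin_eq_top hy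
    (adjoin_eq_top_of_adjoin_insert_algebraMap hgen)
  have hindep := linearIndependent_of_span_eq_top_of_card_mul_finrank_le (k := k) hspan
    (by simpa using hrank)
  let b := Module.Basis.mk hindep hspan.ge
  exact ⟨.of_basis b, by simpa using Module.finrank_eq_card_basis b⟩

theorem mem_ideal_span_range_X_pow_iff {σ R : Type*} [CommSemiring R] {q : ℕ}
    {f : MvPolynomial σ R} :
    f ∈ Ideal.span (Set.range fun i : σ => (MvPolynomial.X i : MvPolynomial σ R) ^ q) ↔
      ∀ m ∈ f.support, ∃ i, q ≤ m i := by
  have hrange : (Set.range fun i : σ => (MvPolynomial.X i : MvPolynomial σ R) ^ q) =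
      (fun s => MvPolynomial.monomial s (1 : R)) '' Set.range fun i => Finsupp.single i q := by
    simp only [MvPolynomial.X_pow_eq_monomial, ← Set.range_comp, Function.comp_def]
  simp only [hrange, MvPolynomial.mem_ideal_span_monomial_image, Set.exists_range_iff,
    Finsupp.single_le_iff]

section TruncatedAlgebras

variable (k : Type*) [Field k] (q n : ℕ)

theorem finrank_truncPoly : Module.finrank k (TruncPoly k q) = q := by
  rw [finrank_quotient_span_eq_natDegree, Polynomial.natDegree_X_pow]

theorem truncMvGen_pow_eq_zero (i : Fin n) : truncMvGen k q n i ^ q = 0 :=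
  Ideal.Quotient.eq_zero_iff_mem.2 (Ideal.subset_span ⟨i, rfl⟩)

theorem aeval_truncMvGen :
    MvPolynomial.aeval (truncMvGen k q n) = Ideal.Quotient.mkₐ k _ :=
  MvPolynomial.algHom_ext fun i => MvPolynomial.aeval_X _ i

theorem adjoin_range_truncMvGen : Algebra.adjoin k (Set.range (truncMvGen k q n)) = ⊤ := by
  rw [Algebra.adjoin_range_eq_range_aeval, aeval_truncMvGen, AlgHom.range_eq_top]
  exact Ideal.Quotient.mkₐ_surjective k _

theorem linearIndependent_prod_truncMvGen_pow :
    LinearIndependent k fun e : Fin n → Fin q => ∏ i, truncMvGen k q n i ^ (e i : ℕ) := by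
  classical
  let exponent (e : Fin n → Fin q) : Fin n →₀ ℕ := Finsupp.equivFunOnFinite.symm fun i => e i
  have exponent_injective : Function.Injective exponent := fun e e' h =>
    funext fun i => Fin.ext (DFunLike.congr_fun h i)
  rw [Fintype.linearIndependent_iff]
  intro g hg e
  let f : MvPolynomial (Fin n) k := ∑ e, MvPolynomial.monomial (exponent e) (g e)
  have aeval_f : MvPolynomial.aeval (truncMvGen k q n) f = 0 := by
    simp only [f, exponent, map_sum, MvPolynomial.aeval_monomial, ← Algebra.smul_def,
      Finsupp.prod_fintype, pow_zero, implies_true, Finsupp.equivFunOnFinite_symm_apply_apply]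
    exact hg
  have exists_le_of_mem_support : ∀ m ∈ f.support, ∃ i, q ≤ m i := by
    rwa [aeval_truncMvGen, Ideal.Quotient.mkₐ_eq_mk, Ideal.Quotient.eq_zero_iff_mem,
      mem_ideal_span_range_X_pow_iff] at aeval_f
  have coeff_f : f.coeff (exponent e) = g e := by
    simp [f, MvPolynomial.coeff_sum, MvPolynomial.coeff_monomial, exponent_injective.eq_iff]
  by_contra hne
  have exponent_mem : exponent e ∈ f.support :=
    MvPolynomial.mem_support_iff.2 (coeff_f.trans_ne hne)
  obtain ⟨i, hi⟩ := exists_le_of_mem_support (exponent e) exponent_mem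
  exact hi.not_gt (e i).isLt

theorem finrank_truncMvPoly : Module.finrank k (TruncMvPoly k q n) = q ^ n := by
  have hspan := span_range_prod_pow_eq_top_of_adjoin_eq_top (truncMvGen_pow_eq_zero k q n)
    (adjoin_range_truncMvGen k q n)
  let b := Module.Basis.mk (linearIndependent_prod_truncMvGen_pow k q n) hspan.ge
  simpa using Module.finrank_eq_card_basis b

end TruncatedAlgebras

theorem free_finrank_truncSMul_of_adjoin_insert_eq_top {k C κ : Type*} [Field k] [CommRing C]
    [Algebra k C] [Fintype κ] {q : ℕ} (hq : q ≠ 0) {c : C} (hc : c ^ q = 0) {y : κ → C}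
    (hy : ∀ j, y j ^ q = 0) (hgen : Algebra.adjoin k (insert c (Set.range y)) = ⊤)
    (hrank : q ^ (Fintype.card κ + 1) ≤ Module.finrank k C) :
    letI := truncSMul (k := k) c hc
    Module.Free (TruncPoly k q) C ∧
      Module.finrank (TruncPoly k q) C = q ^ Fintype.card κ := by
  let _ : Algebra (TruncPoly k q) C := (truncHom c hc).toRingHom.toAlgebra
  have : IsScalarTower k (TruncPoly k q) C :=
    ⟨fun a r x => by
      change truncHom c hc (a • r) * x = a • (truncHom c hc r * x)
      rw [map_smul, smul_mul_assoc]⟩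
  have hpos : 0 < Module.finrank k (TruncPoly k q) :=
    (Nat.pos_of_ne_zero hq).trans_eq (finrank_truncPoly k q).symm
  have : Module.Finite k (TruncPoly k q) := Module.finite_of_finrank_pos hpos
  have : Nontrivial (TruncPoly k q) := Module.nontrivial_of_finrank_pos hpos
  have algebraMap_X : algebraMap (TruncPoly k q) C (Ideal.Quotient.mk _ Polynomial.X) = c :=
    Polynomial.aeval_X c
  exact free_finrank_of_adjoin_insert_algebraMap_eq_top (k := k) hy
    (algebraMap_X.symm ▸ hgen) (by rwa [finrank_truncPoly, ← pow_succ])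

/-- In characteristic `p` this covers all powers `q = p ^ r` with `r ≥ 0`, by additivity of the
iterated Frobenius. -/
theorem statement6_general (k : Type*) [Field k] (q n : ℕ) (hq : q ≠ 0) (lam : Fin n → k)
    (hlam : ∃ i, lam i ≠ 0) (ha : (∑ i, lam i • truncMvGen k q n i) ^ q = 0) :
    letI := truncSMul (k := k) (∑ i, lam i • truncMvGen k q n i) ha
    Module.Free (TruncPoly k q) (TruncMvPoly k q n) ∧
      Module.finrank (TruncPoly k q) (TruncMvPoly k q n) = q ^ (n - 1) := by
  obtain ⟨i₀, hi₀⟩ := hlam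
  have hcard : Fintype.card {j // j ≠ i₀} = n - 1 := by simp
  have hn : n - 1 + 1 = n := Nat.sub_add_cancel i₀.pos
  rw [← hcard]
  refine free_finrank_truncSMul_of_adjoin_insert_eq_top hq ha
    (fun j : {j // j ≠ i₀} => truncMvGen_pow_eq_zero k q n j)
    (adjoin_insert_sum_smul_eq_top (adjoin_range_truncMvGen k q n) hi₀.isUnit) ?_
  rw [hcard, hn, finrank_truncMvPoly]

/-- For `a = λ₁x₁ + ⋯ + λₙxₙ` with the `λᵢ` not all zero, `a^p = 0` and
`k[x₁, …, xₙ]/(x₁^p, …, xₙ^p)` is free of rank `p^(n-1)` over `k[t]/(t^p)`, `t ↦ a`. -/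
theorem statement6 (k : Type*) [Field k] (p : ℕ) [Fact p.Prime] [CharP k p]
    (n : ℕ) (hn : 1 ≤ n) (lam : Fin n → k) (hlam : ∃ i, lam i ≠ 0) :
    ((∑ i, lam i • truncMvGen k p n i) ^ p = 0) ∧
    (letI := truncSMul (k := k) (p := p) (∑ i, lam i • truncMvGen k p n i)
        (truncMvGen_linear_pow_eq_zero k p n lam)
     Module.Free (TruncPoly k p) (TruncMvPoly k p n) ∧
       Module.finrank (TruncPoly k p) (TruncMvPoly k p n) = p ^ (n - 1)) :=
  ⟨truncMvGen_linear_pow_eq_zero k p n lam,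
    statement6_general k p n (Fact.out : p.Prime).ne_zero lam hlam _⟩
end
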